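/- Let G be an antipodal distance-regular graph of diameter 3 which is an antipodal r-cover, with distinct adjacency eigenvalues k > θ₁ > θ₂ > θ₃. Then the distance matrix 𝔻₁ of G has exactly three distinct eigenvalues if and only if θ₃ = −r − 1. -/

import Mathlib

open Matrix

variable {V : Type*} [Fintype V] [DecidableEq V]

/-- The distance-`i` matrix of a graph: the `(x,y)` entry is 1 if `dist x y = i`, else 0. -/
noncomputable def distM (G : SimpleGraph V) (i : ℕ) : Matrix V V ℝ :=
  Matrix.of fun x y => if G.dist x y = i then (1 : ℝ) else 0

/-- The `q`-distance matrix `𝔻_q = ∑_{i=1}^D (1 + 1/q + ⋯ + 1/q^{i-1}) • A_i`. -/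
noncomputable def qDist (G : SimpleGraph V) (D : ℕ) (q : ℝ) : Matrix V V ℝ :=
  ∑ i ∈ Finset.Icc 1 D, (∑ j ∈ Finset.range i, (1 / q) ^ j) • distM G i

/-- `G` is distance-regular with diameter `D` and intersection numbers `b i`, `c i`
(with `c 1 = 1`): for any vertices `x, y` at distance `i ≤ D`, the number of neighbors
of `y` at distance `i - 1` from `x` is `c i` and the number of neighbors of `y` at
distance `i + 1` from `x` is `b i`. -/
def IsDRG (G : SimpleGraph V) (D : ℕ) (b c : ℕ → ℕ) : Prop :=
  G.Connected ∧
  (∀ x y : V, G.dist x y ≤ D) ∧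
  (∃ x y : V, G.dist x y = D) ∧
  c 1 = 1 ∧
  ∀ i ≤ D, ∀ x y : V, G.dist x y = i →
    ({z : V | G.Adj y z ∧ G.dist x z = i - 1} : Set V).ncard = c i ∧
    ({z : V | G.Adj y z ∧ G.dist x z = i + 1} : Set V).ncard = b i

/-- `a i = k - b i - c i` as a real number, where `k = b 0`. -/
noncomputable def aInt (b c : ℕ → ℕ) (i : ℕ) : ℝ := (b 0 : ℝ) - (b i : ℝ) - (c i : ℝ)

/-- `G` is antipodal with diameter `D`: being equal or at distance `D` is an equivalence
relation on the vertices. -/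
def IsAntipodal (G : SimpleGraph V) (D : ℕ) : Prop :=
  ∀ u v w : V, G.dist u v = D → G.dist u w = D → (v = w ∨ G.dist v w = D)

/-- `G` is an antipodal `r`-cover with diameter `D`: every antipodal class has exactly `r`
elements. -/
def IsAntipodalCover (G : SimpleGraph V) (D r : ℕ) : Prop :=
  IsAntipodal G D ∧ ∀ x : V, ({y : V | y = x ∨ G.dist x y = D} : Set V).ncard = r

/-!
In a distance-regular graph each distance matrix is a polynomial `Aᵢ = pᵢ(A)` in the adjacency
matrix, so the distance eigenvalues are the images `∑ i · pᵢ(θ)` of the adjacency eigenvalues. For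
an antipodal `r`-cover of diameter 3 the array is `{k, c₂(r - 1), 1; 1, c₂, k}`, and the
eigenvalues other than `k` are `-1` and the roots of `θ² = (a₁ - c₂) θ + k`, where
`a₁ - c₂ = k - 1 - c₂ r`. The polynomial `θ² - (a₁ - c₂) θ - k` is negative at `-1`, so `θ₂ = -1`
and `θ₁`, `θ₃` are its roots. The distance eigenvalues are then `k + (2k + 3)(r - 1)`, `-θ₁ - 3`,
`r - 2` and `-θ₃ - 3`. The first is larger and the second smaller than the two others, so exactly
three are distinct iff `r - 2 = -θ₃ - 3`.
-/

theorem ncard_insert_eq_three_iff {α : Type*} {u v w t : α} (huv : u ≠ v) (huw : u ≠ w)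
    (hut : u ≠ t) (hvw : v ≠ w) (hvt : v ≠ t) : ({u, v, w, t} : Set α).ncard = 3 ↔ w = t := by
  rw [Set.ncard_insert_of_notMem (by simp [huv, huw, hut]),
    Set.ncard_insert_of_notMem (by simp [hvw, hvt])]
  obtain rfl | hwt := eq_or_ne w t
  · simp
  · simp [Set.ncard_pair hwt, hwt]

section Spectrum

open Polynomial

theorem spectrum_aeval {A : Type*} [Ring A] [StarRing A] [TopologicalSpace A] [Algebra ℝ A]
    [ContinuousFunctionalCalculus ℝ A IsSelfAdjoint] {a : A} (ha : IsSelfAdjoint a) (p : ℝ[X]) :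
    spectrum ℝ (aeval a p) = (p.eval ·) '' spectrum ℝ a := by
  rw [← cfc_polynomial p a, cfc_map_spectrum p.eval a]

theorem eval_eq_zero_of_mem_spectrum {𝕜 A : Type*} [Field 𝕜] [Ring A] [Nontrivial A]
    [Algebra 𝕜 A] {a : A} {p : 𝕜[X]} {θ : 𝕜} (hp : aeval a p = 0) (hθ : θ ∈ spectrum 𝕜 a) :
    p.eval θ = 0 := by
  have hmem := spectrum.subset_polynomial_aeval a p (Set.mem_image_of_mem _ hθ)
  rwa [hp, spectrum.zero_eq] at hmem

end Spectrum

section QuadraticRoots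

variable {R : Type*} [CommRing R] {m s p x y z : R}

theorem mul_sub_eq_of_roots [IsDomain R] (hx : x ^ 2 - s * x - p = 0)
    (hy : y ^ 2 - s * y - p = 0) (hxy : x ≠ y) (t : R) : (t - x) * (t - y) = t ^ 2 - s * t - p := by
  have hsum : s = x + y := by
    refine mul_left_cancel₀ (sub_ne_zero.mpr hxy) ?_
    linear_combination hy - hx
  subst hsum
  linear_combination -hx

theorem middle_root_eq [LinearOrder R] [IsStrictOrderedRing R] (hm : m ^ 2 - s * m - p < 0)
    (hxy : y < x) (hyz : z < y)
    (hx : (x - m) * (x ^ 2 - s * x - p) = 0) (hy : (y - m) * (y ^ 2 - s * y - p) = 0)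
    (hz : (z - m) * (z ^ 2 - s * z - p) = 0) : y = m := by
  by_contra hym
  have hqy := (mul_eq_zero.mp hy).resolve_left (sub_ne_zero.mpr hym)
  -- `m` lies strictly between any two roots of the quadratic factor.
  have hmxy (hxm : x ≠ m) : y < m := by
    have hqx := (mul_eq_zero.mp hx).resolve_left (sub_ne_zero.mpr hxm)
    by_contra! hmy
    nlinarith [mul_sub_eq_of_roots hqx hqy hxy.ne' m]
  have hmyz (hzm : z ≠ m) : m < y := by
    have hqz := (mul_eq_zero.mp hz).resolve_left (sub_ne_zero.mpr hzm)
    by_contra! hmy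
    nlinarith [mul_sub_eq_of_roots hqy hqz hyz.ne' m]
  grind

end QuadraticRoots

section Distance

variable {α : Type*} {G : SimpleGraph α} {D r i : ℕ} {b c : ℕ → ℕ} {x y : α}

theorem exists_adj_dist_eq_of_dist_eq_succ (hG : G.Connected) (hxy : G.dist x y = i + 1) :
    ∃ z, G.Adj y z ∧ G.dist x z = i := by
  obtain ⟨p, hp⟩ := hG.exists_walk_length_eq_dist y x
  rw [SimpleGraph.dist_comm, hxy] at hp
  cases p with
  | nil => simp at hp
  | @cons _ z _ hyz q =>
    have hzx : G.dist z x ≤ i := (SimpleGraph.dist_le q).trans_eq (by simpa using hp)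
    rw [SimpleGraph.dist_comm] at hzx
    exact ⟨z, hyz, by grind [hyz.diff_dist_adj (u := x)]⟩

namespace IsDRG

theorem connected (hG : IsDRG G D b c) : G.Connected := hG.1

theorem dist_le (hG : IsDRG G D b c) (x y : α) : G.dist x y ≤ D := hG.2.1 x y

theorem exists_dist_eq_diam (hG : IsDRG G D b c) : ∃ x y, G.dist x y = D := hG.2.2.1

theorem c_one (hG : IsDRG G D b c) : c 1 = 1 := hG.2.2.2.1

theorem ncard_adj_dist_pred (hG : IsDRG G D b c) (hi : i + 1 ≤ D) (hxy : G.dist x y = i + 1) :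
    {z | G.Adj y z ∧ G.dist x z = i}.ncard = c (i + 1) :=
  (hG.2.2.2.2 (i + 1) hi x y hxy).1

theorem ncard_adj_dist_succ (hG : IsDRG G D b c) (hi : i ≤ D) (hxy : G.dist x y = i) :
    {z | G.Adj y z ∧ G.dist x z = i + 1}.ncard = b i :=
  (hG.2.2.2.2 i hi x y hxy).2

theorem ncard_neighborSet (hG : IsDRG G D b c) (y : α) : (G.neighborSet y).ncard = b 0 := by
  rw [← hG.ncard_adj_dist_succ (Nat.zero_le D) (G.dist_self (v := y))]
  congr 1 with z
  simp

theorem ncard_adj_dist_self [Finite α] (hG : IsDRG G D b c) (hi : i + 1 ≤ D)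
    (hxy : G.dist x y = i + 1) :
    ({z | G.Adj y z ∧ G.dist x z = i + 1}.ncard : ℝ) = aInt b c (i + 1) := by
  have hunion : G.neighborSet y = {z | G.Adj y z ∧ G.dist x z = i} ∪
      {z | G.Adj y z ∧ G.dist x z = i + 1} ∪ {z | G.Adj y z ∧ G.dist x z = i + 1 + 1} := by
    ext z
    have := fun h : G.Adj y z ↦ h.diff_dist_adj (u := x)
    simp only [SimpleGraph.mem_neighborSet, Set.mem_union, Set.mem_ofPred_eq]
    grind
  have hcard := congrArg Set.ncard hunion
  rw [Set.ncard_union_eq (by grind), Set.ncard_union_eq (by grind), hG.ncard_neighborSet,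
    hG.ncard_adj_dist_pred hi hxy, hG.ncard_adj_dist_succ hi hxy] at hcard
  rw [aInt, hcard]
  push_cast
  ring

theorem exists_adj_dist_eq (hG : IsDRG G D b c) (hi : i < D) :
    ∃ x y z, G.Adj y z ∧ G.dist x y = i ∧ G.dist x z = i + 1 := by
  obtain ⟨x, w, hxw⟩ := hG.exists_dist_eq_diam
  obtain ⟨z, hz⟩ : ∃ z, G.dist x z = i + 1 := by
    refine Nat.decreasingInduction (motive := fun j _ ↦ ∃ z, G.dist x z = j) ?_ ⟨w, hxw⟩ hi
    rintro j - ⟨z, hz⟩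
    obtain ⟨y, -, hy⟩ := exists_adj_dist_eq_of_dist_eq_succ hG.connected hz
    exact ⟨y, hy⟩
  obtain ⟨y, hzy, hy⟩ := exists_adj_dist_eq_of_dist_eq_succ hG.connected hz
  exact ⟨x, y, z, hzy.symm, hy, hz⟩

theorem c_pos [Finite α] (hG : IsDRG G D b c) (hi : i < D) : 0 < c (i + 1) := by
  obtain ⟨x, y, z, hyz, hy, hz⟩ := hG.exists_adj_dist_eq hi
  rw [← hG.ncard_adj_dist_pred hi hz, Set.ncard_pos]
  exact ⟨y, hyz.symm, hy⟩

theorem b_pos [Finite α] (hG : IsDRG G D b c) (hi : i < D) : 0 < b i := by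
  obtain ⟨x, y, z, hyz, hy, hz⟩ := hG.exists_adj_dist_eq hi
  rw [← hG.ncard_adj_dist_succ hi.le hy, Set.ncard_pos]
  exact ⟨z, hyz, hz⟩

theorem b_diam (hG : IsDRG G D b c) : b D = 0 := by
  obtain ⟨x, y, hxy⟩ := hG.exists_dist_eq_diam
  rw [← hG.ncard_adj_dist_succ le_rfl hxy]
  convert Set.ncard_empty α
  ext z
  have := hG.dist_le x z
  simp only [Set.mem_ofPred_eq, Set.mem_empty_iff_false]
  lia

theorem ncard_sphere_mul_b [Finite α] (hG : IsDRG G D b c) (hi : i < D) (x : α) :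
    {y | G.dist x y = i}.ncard * b i = {y | G.dist x y = i + 1}.ncard * c (i + 1) := by
  classical
  have := Fintype.ofFinite α
  simp only [Set.ncard_eq_toFinset_card']
  refine Finset.card_mul_eq_card_mul G.Adj (fun y hy ↦ ?_) (fun y hy ↦ ?_) <;>
    rw [Set.mem_toFinset] at hy
  · rw [← hG.ncard_adj_dist_succ hi.le hy, Set.ncard_eq_toFinset_card']
    congr 1 with z
    simp [and_comm]
  · rw [← hG.ncard_adj_dist_pred hi hy, Set.ncard_eq_toFinset_card']
    congr 1 with z
    simp [and_comm, G.adj_comm]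

theorem c_diam_of_isAntipodal (hG : IsDRG G D b c) (hanti : IsAntipodal G D) (hD : 2 ≤ D) :
    c D = b 0 := by
  obtain ⟨d, rfl⟩ : ∃ d, D = d + 1 := ⟨D - 1, by lia⟩
  obtain ⟨x, y, hxy⟩ := hG.exists_dist_eq_diam
  rw [← hG.ncard_adj_dist_pred le_rfl hxy, ← hG.ncard_neighborSet y]
  congr 1 with z
  refine and_iff_left_of_imp fun hyz ↦ ?_
  have hyz' : G.dist y z = 1 := SimpleGraph.dist_eq_one_iff_adj.mpr hyz
  have hne : G.dist x z ≠ d + 1 := fun hxz ↦ by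
    obtain rfl | h := hanti x y z hxy hxz
    · exact hyz.ne rfl
    · lia
  have := hyz.diff_dist_adj (u := x)
  have := hG.dist_le x z
  lia

theorem b_eq_one_of_isAntipodal {d : ℕ} (hG : IsDRG G (d + 1) b c)
    (hanti : IsAntipodal G (d + 1)) (hd : 2 ≤ d) : b d = 1 := by
  obtain ⟨x, y, w, hyw, hxy, hxw⟩ := hG.exists_adj_dist_eq d.lt_succ_self
  rw [← hG.ncard_adj_dist_succ d.le_succ hxy, Set.ncard_eq_one]
  refine ⟨w, Set.eq_singleton_iff_unique_mem.mpr ⟨⟨hyw, hxw⟩, ?_⟩⟩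
  rintro z ⟨hyz, hxz⟩
  refine (hanti x z w hxz hxw).resolve_right fun hzw ↦ ?_
  have htri := hG.connected.dist_triangle (u := z) (v := y) (w := w)
  rw [hzw, SimpleGraph.dist_eq_one_iff_adj.mpr hyz.symm,
    SimpleGraph.dist_eq_one_iff_adj.mpr hyw] at htri
  lia

end IsDRG

theorem IsAntipodalCover.pos [Finite α] [Nonempty α] (hcov : IsAntipodalCover G D r) : 0 < r := by
  obtain ⟨x⟩ := ‹Nonempty α›
  rw [← hcov.2 x, Set.ncard_pos]
  exact ⟨x, Or.inl rfl⟩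

theorem IsAntipodalCover.ncard_dist_eq_add_one [Finite α] (hcov : IsAntipodalCover G D r)
    (hD : 0 < D) (x : α) : {y | G.dist x y = D}.ncard + 1 = r := by
  rw [← hcov.2 x, ← Set.ncard_insert_of_notMem (a := x) (by simp [hD.ne])]
  rfl

theorem IsDRG.b_one_of_isAntipodalCover [Finite α] (hG : IsDRG G 3 b c)
    (hcov : IsAntipodalCover G 3 r) : (b 1 : ℝ) = c 2 * (r - 1) := by
  obtain ⟨x, -⟩ := hG.exists_dist_eq_diam
  have hsphere : {y | G.dist x y = 1}.ncard = b 0 := by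
    rw [← hG.ncard_neighborSet x]
    congr 1 with y
    simp
  have h₁ := hG.ncard_sphere_mul_b (i := 1) (by norm_num) x
  have h₂ := hG.ncard_sphere_mul_b (i := 2) (by norm_num) x
  rw [hG.b_eq_one_of_isAntipodal hcov.1 le_rfl,
    hG.c_diam_of_isAntipodal hcov.1 (by norm_num)] at h₂
  rw [hsphere, ← mul_one (Set.ncard {y | G.dist x y = 1 + 1}), h₂] at h₁
  have hk : b 0 ≠ 0 := (hG.b_pos (by norm_num)).ne'
  have hb : b 1 = c 2 * {y | G.dist x y = 3}.ncard :=
    mul_left_cancel₀ hk (by rw [h₁]; ring)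
  rw [hb, ← hcov.ncard_dist_eq_add_one (by norm_num) x]
  push_cast
  ring

end Distance

section DistanceMatrices

open Polynomial

theorem isSelfAdjoint_distM {α : Type*} (G : SimpleGraph α) (i : ℕ) :
    IsSelfAdjoint (distM G i) := by
  ext x y
  simp [distM, Matrix.star_apply, G.dist_comm (u := y)]

theorem distM_mul_distM_one_apply {α : Type*} [Fintype α] (G : SimpleGraph α) (i : ℕ) (x y : α) :
    (distM G i * distM G 1) x y = ({z | G.Adj y z ∧ G.dist x z = i}.ncard : ℝ) := by
  classical
  simp only [Matrix.mul_apply, distM, Matrix.of_apply, SimpleGraph.dist_eq_one_iff_adj,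
    mul_ite, mul_one, mul_zero, ← ite_and, Finset.sum_boole, Set.ncard_eq_toFinset_card',
    Set.toFinset_ofPred, G.adj_comm]

/-- The distance polynomials of an intersection array, for which `Aᵢ = pᵢ(A)`. They come from the
three-term recurrence `cᵢ₊₂ pᵢ₊₂ = (X - aᵢ₊₁) pᵢ₊₁ - bᵢ pᵢ`, and are meaningful only as long as the
`cᵢ` do not vanish, i.e. up to the diameter. -/
noncomputable def distPoly (b c : ℕ → ℕ) : ℕ → ℝ[X]
  | 0 => 1
  | 1 => X
  | i + 2 => C (c (i + 2) : ℝ)⁻¹ *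
      ((X - C (aInt b c (i + 1))) * distPoly b c (i + 1) - C (b i : ℝ) * distPoly b c i)

namespace IsDRG

variable {G : SimpleGraph V} {D i : ℕ} {b c : ℕ → ℕ} {θ : ℝ}

theorem distM_mul_distM_one {α : Type*} [Fintype α] {G : SimpleGraph α} (hG : IsDRG G D b c)
    (hi : i + 1 ≤ D) :
    distM G (i + 1) * distM G 1 = (b i : ℝ) • distM G i + aInt b c (i + 1) • distM G (i + 1) +
      (c (i + 2) : ℝ) • distM G (i + 2) := by
  ext x y
  rw [distM_mul_distM_one_apply]
  simp only [distM, Matrix.add_apply, Matrix.smul_apply, Matrix.of_apply, smul_eq_mul]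
  by_cases h₀ : G.dist x y = i
  · simp [hG.ncard_adj_dist_succ (by lia) h₀, h₀]
  by_cases h₁ : G.dist x y = i + 1
  · simp [hG.ncard_adj_dist_self hi h₁, h₁]
  by_cases h₂ : G.dist x y = i + 2
  · simp [hG.ncard_adj_dist_pred (h₂ ▸ hG.dist_le x y) h₂, h₂]
  · have hempty : {z | G.Adj y z ∧ G.dist x z = i + 1} = ∅ := by
      rw [Set.eq_empty_iff_forall_notMem]
      rintro z ⟨hyz, hxz⟩
      have := hyz.symm.diff_dist_adj (u := x)
      lia
    simp [hempty, h₀, h₁, h₂]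

theorem aeval_distPoly (hG : IsDRG G D b c) :
    ∀ {i}, i ≤ D → aeval (distM G 1) (distPoly b c i) = distM G i
  | 0, _ => by
    ext x y
    simp [distPoly, distM, Matrix.one_apply, hG.connected.dist_eq_zero_iff]
  | 1, _ => by simp [distPoly]
  | i + 2, hi => by
    have hc : (c (i + 2) : ℝ) ≠ 0 := Nat.cast_ne_zero.mpr (hG.c_pos hi).ne'
    have hrec := hG.distM_mul_distM_one (i := i) (by lia)
    have hcomm := (Commute.all (X : ℝ[X]) (distPoly b c (i + 1))).map (aeval (distM G 1))
    simp only [aeval_X, hG.aeval_distPoly (i := i + 1) (by lia)] at hcomm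
    simp only [distPoly, map_mul, map_sub, aeval_C, aeval_X, hG.aeval_distPoly (i := i) (by lia),
      hG.aeval_distPoly (i := i + 1) (by lia), ← Algebra.smul_def, sub_mul, hcomm.eq, hrec]
    match_scalars <;> field_simp <;> ring

theorem c_mul_eval_distPoly {α : Type*} [Finite α] {G : SimpleGraph α} (hG : IsDRG G D b c)
    (hi : i + 2 ≤ D) (θ : ℝ) :
    (c (i + 2) : ℝ) * (distPoly b c (i + 2)).eval θ =
      (θ - aInt b c (i + 1)) * (distPoly b c (i + 1)).eval θ - b i * (distPoly b c i).eval θ := by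
  have hc : (c (i + 2) : ℝ) ≠ 0 := Nat.cast_ne_zero.mpr (hG.c_pos hi).ne'
  simp [distPoly, hc]

theorem sub_aInt_mul_eval_distPoly {d : ℕ} (hG : IsDRG G (d + 1) b c)
    (hθ : θ ∈ spectrum ℝ (distM G 1)) :
    (θ - aInt b c (d + 1)) * (distPoly b c (d + 1)).eval θ = b d * (distPoly b c d).eval θ := by
  -- The recurrence closes up at the diameter.
  have hlast : distM G (d + 2) = 0 := by
    ext x y
    have := hG.dist_le x y
    simp [distM, show G.dist x y ≠ d + 2 by lia]
  have hrec := hG.distM_mul_distM_one le_rfl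
  rw [hlast, smul_zero, add_zero] at hrec
  have hzero : aeval (distM G 1) (distPoly b c (d + 1) * (X - C (aInt b c (d + 1))) -
      C (b d : ℝ) * distPoly b c d) = 0 := by
    simp only [map_mul, map_sub, aeval_C, aeval_X, hG.aeval_distPoly le_rfl,
      hG.aeval_distPoly d.le_succ, mul_sub, hrec, ← Algebra.commutes (aInt b c (d + 1)),
      ← Algebra.smul_def]
    abel
  have : Nonempty V := hG.connected.nonempty
  have hroot := eval_eq_zero_of_mem_spectrum hzero hθ
  simp only [eval_sub, eval_mul, eval_X, eval_C] at hroot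
  linear_combination hroot

theorem spectrum_qDist (hG : IsDRG G D b c) (q : ℝ) :
    spectrum ℝ (qDist G D q) =
      (fun θ ↦ ∑ i ∈ Finset.Icc 1 D, (∑ j ∈ Finset.range i, (1 / q) ^ j) *
        (distPoly b c i).eval θ) '' spectrum ℝ (distM G 1) := by
  have hpoly : qDist G D q = aeval (distM G 1) (∑ i ∈ Finset.Icc 1 D,
      C (∑ j ∈ Finset.range i, (1 / q) ^ j) * distPoly b c i) := by
    rw [qDist, map_sum]
    refine Finset.sum_congr rfl fun i hi ↦ ?_
    rw [map_mul, aeval_C, hG.aeval_distPoly (Finset.mem_Icc.mp hi).2, Algebra.smul_def]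
  rw [hpoly, spectrum_aeval (isSelfAdjoint_distM G 1)]
  simp only [eval_finsetSum, eval_mul, eval_C]

theorem abs_le_of_mem_spectrum (hG : IsDRG G D b c) (hθ : θ ∈ spectrum ℝ (distM G 1)) :
    |θ| ≤ b 0 := by
  rw [← Matrix.spectrum_toLin', ← Module.End.hasEigenvalue_iff_mem_spectrum] at hθ
  obtain ⟨x, hx⟩ := eigenvalue_mem_ball hθ
  have hdiag : distM G 1 x x = 0 := by simp [distM]
  have hrow : ∑ y, ‖distM G 1 x y‖ = b 0 := by
    classical
    rw [← hG.ncard_neighborSet x, Set.ncard_eq_toFinset_card']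
    simp only [distM, Matrix.of_apply, apply_ite norm, norm_one, norm_zero, Finset.sum_boole]
    congr 2 with y
    simp
  calc |θ| ≤ ∑ y ∈ Finset.univ.erase x, ‖distM G 1 x y‖ := by simpa [hdiag] using hx
    _ ≤ ∑ y, ‖distM G 1 x y‖ :=
      Finset.sum_le_sum_of_subset_of_nonneg (Finset.erase_subset _ _) fun _ _ _ ↦ norm_nonneg _
    _ = b 0 := hrow

end IsDRG

end DistanceMatrices

section AntipodalCover

variable {b c : ℕ → ℕ} {r : ℕ} {θ : ℝ}

namespace IsDRG

section Values

variable {α : Type*} [Finite α] {G : SimpleGraph α}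

theorem c_two_mul_eval_distPoly_two (hG : IsDRG G 3 b c) (hcov : IsAntipodalCover G 3 r) (θ : ℝ) :
    c 2 * (distPoly b c 2).eval θ = θ ^ 2 - (b 0 - 1 - c 2 * (r - 1)) * θ - b 0 := by
  rw [hG.c_mul_eval_distPoly (i := 0) (by norm_num)]
  simp only [zero_add, distPoly, aInt, hG.c_one, hG.b_one_of_isAntipodalCover hcov,
    Polynomial.eval_X, Polynomial.eval_one, Nat.cast_one]
  ring

theorem b_zero_mul_eval_distPoly_three (hG : IsDRG G 3 b c) (hcov : IsAntipodalCover G 3 r)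
    (θ : ℝ) :
    b 0 * (distPoly b c 3).eval θ =
      (θ - (b 0 - 1 - c 2)) * (distPoly b c 2).eval θ - c 2 * (r - 1) * θ := by
  have hrec := hG.c_mul_eval_distPoly (i := 1) le_rfl θ
  simp only [Nat.reduceAdd, hG.c_diam_of_isAntipodal hcov.1 (by norm_num : 2 ≤ 3)] at hrec
  rw [hrec, aInt, hG.b_eq_one_of_isAntipodal hcov.1 le_rfl, hG.b_one_of_isAntipodalCover hcov]
  simp [distPoly]

theorem eval_distPoly_eq (hG : IsDRG G 3 b c) (hcov : IsAntipodalCover G 3 r) {u v : ℝ}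
    (hu : c 2 * u = θ ^ 2 - (b 0 - 1 - c 2 * (r - 1)) * θ - b 0)
    (hv : b 0 * v = (θ - (b 0 - 1 - c 2)) * u - c 2 * (r - 1) * θ) :
    (distPoly b c 2).eval θ = u ∧ (distPoly b c 3).eval θ = v := by
  have hc : (c 2 : ℝ) ≠ 0 := Nat.cast_ne_zero.mpr (hG.c_pos (by norm_num)).ne'
  have hk : (b 0 : ℝ) ≠ 0 := Nat.cast_ne_zero.mpr (hG.b_pos (by norm_num)).ne'
  have hp₂ : (distPoly b c 2).eval θ = u :=
    mul_left_cancel₀ hc ((hG.c_two_mul_eval_distPoly_two hcov θ).trans hu.symm)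
  refine ⟨hp₂, mul_left_cancel₀ hk ?_⟩
  rw [hG.b_zero_mul_eval_distPoly_three hcov, hp₂, hv]

theorem eval_distPoly_b_zero (hG : IsDRG G 3 b c) (hcov : IsAntipodalCover G 3 r) :
    (distPoly b c 2).eval (b 0 : ℝ) = b 0 * (r - 1) ∧
      (distPoly b c 3).eval (b 0 : ℝ) = r - 1 :=
  hG.eval_distPoly_eq hcov (by ring) (by ring)

theorem eval_distPoly_neg_one (hG : IsDRG G 3 b c) (hcov : IsAntipodalCover G 3 r) :
    (distPoly b c 2).eval (-1) = -(r - 1 : ℝ) ∧ (distPoly b c 3).eval (-1) = (r - 1 : ℝ) :=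
  hG.eval_distPoly_eq hcov (by ring) (by ring)

theorem eval_distPoly_of_root (hG : IsDRG G 3 b c) (hcov : IsAntipodalCover G 3 r)
    (hθ : θ ^ 2 - (b 0 - 1 - c 2 * r) * θ - b 0 = 0) :
    (distPoly b c 2).eval θ = -θ ∧ (distPoly b c 3).eval θ = -1 :=
  hG.eval_distPoly_eq hcov (by linear_combination -hθ) (by linear_combination hθ)

end Values

variable {G : SimpleGraph V}

theorem root_of_mem_spectrum (hG : IsDRG G 3 b c) (hcov : IsAntipodalCover G 3 r)
    (hθ : θ ∈ spectrum ℝ (distM G 1)) (hne : θ ≠ b 0) :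
    (θ + 1) * (θ ^ 2 - (b 0 - 1 - c 2 * r) * θ - b 0) = 0 := by
  have hclose : θ * (distPoly b c 3).eval θ = (distPoly b c 2).eval θ := by
    have h := hG.sub_aInt_mul_eval_distPoly hθ
    simpa [aInt, hG.b_diam, hG.c_diam_of_isAntipodal hcov.1 (by norm_num : 2 ≤ 3),
      hG.b_eq_one_of_isAntipodal hcov.1 le_rfl] using h
  refine mul_left_cancel₀ (sub_ne_zero.mpr hne) ?_
  linear_combination (θ * (θ - (b 0 - 1 - c 2)) - b 0) *
      (-hG.c_two_mul_eval_distPoly_two hcov θ) + c 2 * b 0 * hclose -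
    c 2 * θ * hG.b_zero_mul_eval_distPoly_three hcov θ

theorem spectrum_qDist_three_one (hG : IsDRG G 3 b c) :
    spectrum ℝ (qDist G 3 1) =
      (fun θ ↦ θ + 2 * (distPoly b c 2).eval θ + 3 * (distPoly b c 3).eval θ) ''
        spectrum ℝ (distM G 1) := by
  rw [hG.spectrum_qDist]
  congr 1 with θ
  simp [Finset.sum_Icc_succ_top, distPoly]

theorem spectrum_qDist_three_one_of_isAntipodalCover (hG : IsDRG G 3 b c)
    (hcov : IsAntipodalCover G 3 r) {θ₁ θ₃ : ℝ}
    (hθ₁ : θ₁ ^ 2 - (b 0 - 1 - c 2 * r) * θ₁ - b 0 = 0)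
    (hθ₃ : θ₃ ^ 2 - (b 0 - 1 - c 2 * r) * θ₃ - b 0 = 0)
    (hspec : spectrum ℝ (distM G 1) = {(b 0 : ℝ), θ₁, -1, θ₃}) :
    spectrum ℝ (qDist G 3 1) =
      {b 0 + (2 * b 0 + 3) * (r - 1 : ℝ), -θ₁ - 3, (r : ℝ) - 2, -θ₃ - 3} := by
  obtain ⟨hk₂, hk₃⟩ := hG.eval_distPoly_b_zero hcov
  obtain ⟨hn₂, hn₃⟩ := hG.eval_distPoly_neg_one hcov
  obtain ⟨h₁₂, h₁₃⟩ := hG.eval_distPoly_of_root hcov hθ₁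
  obtain ⟨h₃₂, h₃₃⟩ := hG.eval_distPoly_of_root hcov hθ₃
  simp only [hG.spectrum_qDist_three_one, hspec, Set.image_insert_eq, Set.image_singleton, hk₂,
    hk₃, hn₂, hn₃, h₁₂, h₁₃, h₃₂, h₃₃]
  ring_nf

theorem eigenvalues_of_isAntipodalCover (hG : IsDRG G 3 b c) (hcov : IsAntipodalCover G 3 r)
    {θ₁ θ₂ θ₃ : ℝ} (h₁ : b 0 > θ₁) (h₂ : θ₁ > θ₂) (h₃ : θ₂ > θ₃)
    (hspec : spectrum ℝ (distM G 1) = {(b 0 : ℝ), θ₁, θ₂, θ₃}) :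
    θ₂ = -1 ∧ θ₁ ^ 2 - (b 0 - 1 - c 2 * r) * θ₁ - b 0 = 0 ∧
      θ₃ ^ 2 - (b 0 - 1 - c 2 * r) * θ₃ - b 0 = 0 := by
  have hroot {θ : ℝ} (hθ : θ ∈ spectrum ℝ (distM G 1)) (hne : θ ≠ b 0) :
      (θ - -1) * (θ ^ 2 - (b 0 - 1 - c 2 * r) * θ - b 0) = 0 := by
    rw [sub_neg_eq_add]
    exact hG.root_of_mem_spectrum hcov hθ hne
  have hroot₁ := hroot (θ := θ₁) (by simp [hspec]) (by linarith)
  have hroot₂ := hroot (θ := θ₂) (by simp [hspec]) (by linarith)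
  have hroot₃ := hroot (θ := θ₃) (by simp [hspec]) (by linarith)
  have hneg : (-1) ^ 2 - (b 0 - 1 - c 2 * r : ℝ) * (-1) - b 0 < 0 := by
    have : Nonempty V := hG.connected.nonempty
    have hcr : (0 : ℝ) < c 2 * r := by exact_mod_cast Nat.mul_pos (hG.c_pos (by norm_num)) hcov.pos
    linarith
  obtain rfl := middle_root_eq hneg h₂ h₃ hroot₁ hroot₂ hroot₃
  exact ⟨rfl, (mul_eq_zero.mp hroot₁).resolve_left (by linarith),
    (mul_eq_zero.mp hroot₃).resolve_left (by linarith)⟩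

end IsDRG

end AntipodalCover

/-- Corollary 3.11: an antipodal distance-regular graph of diameter 3
which is an antipodal `r`-cover, with distinct adjacency eigenvalues `k > θ₁ > θ₂ > θ₃`,
has exactly three distinct distance eigenvalues if and only if `θ₃ = −r − 1`. -/
theorem stmt16 (G : SimpleGraph V) (b c : ℕ → ℕ) (r : ℕ) (hG : IsDRG G 3 b c)
    (hcov : IsAntipodalCover G 3 r)
    (θ₁ θ₂ θ₃ : ℝ) (h1 : (b 0 : ℝ) > θ₁) (h2 : θ₁ > θ₂) (h3 : θ₂ > θ₃)
    (hspec : spectrum ℝ (distM G 1) = ({(b 0 : ℝ), θ₁, θ₂, θ₃} : Set ℝ)) :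
    (spectrum ℝ (qDist G 3 1)).ncard = 3 ↔ θ₃ = -(r : ℝ) - 1 := by
  obtain ⟨rfl, hθ₁, hθ₃⟩ := hG.eigenvalues_of_isAntipodalCover hcov h1 h2 h3 hspec
  have hr : (1 : ℝ) ≤ r := by
    have : Nonempty V := hG.connected.nonempty
    exact_mod_cast hcov.pos
  have hk : (0 : ℝ) ≤ b 0 * (r - 1) := mul_nonneg (Nat.cast_nonneg _) (by linarith)
  have hθ₃_ge : -(b 0 : ℝ) ≤ θ₃ :=
    (abs_le.mp (hG.abs_le_of_mem_spectrum (by simp [hspec]))).1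
  rw [hG.spectrum_qDist_three_one_of_isAntipodalCover hcov hθ₁ hθ₃ hspec,
    ncard_insert_eq_three_iff (ne_of_gt (by linarith)) (ne_of_gt (by linarith))
      (ne_of_gt (by linarith)) (ne_of_lt (by linarith)) (ne_of_lt (by linarith))]
  constructor <;> intro h <;> linarith
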